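/- For every integer d ≥ 1, lim_{c → ∞} (1/c^d) · (c²/(2π))^d · ∫_{B^d} ∫_{B^d} J_{d/2}(c‖x−y‖)² / (c‖x−y‖)^d dx dy = 1/(2^d Γ(d/2+1)²). Equivalently, the squared Hilbert–Schmidt norm of the operator Q_c on L²(B^d) with kernel (c/(2π))^d (2π)^{d/2} J_{d/2}(c‖x−y‖)/(c‖x−y‖)^{d/2} satisfies ‖Q_c‖²_{HS} = c^d/(2^d Γ(d/2+1)²) + o(c^d) as c → ∞. -/

import Mathlib

/-!
Put `K z = J_{n/2}(‖z‖)² / ‖z‖ⁿ`. Up to a constant and a dilation by `2π`, `K` is the squared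
modulus of the Fourier transform of the indicator of the unit ball, so Plancherel gives
`∫ K = vol B`. Substituting `z = c (x - y)` turns `cⁿ ∫_S ∫_S K (c (x - y))` into
`∫ K z * vol (S ∩ (S + z / c)) dz`, which tends to `vol S * vol B` by dominated convergence.

The Bessel formula for the Fourier transform of the ball is checked on power series: in polar
coordinates the integral of a homogeneous function over the ball is a `Γ`-multiple of its integral
against a Gaussian, and Gaussian moments factor over an orthonormal basis.
-/

open MeasureTheory Real

noncomputable section

/-- The Bessel function of the first kind `J_ν`, defined by its power series. -/
def besselJ (v x : ℝ) : ℝ :=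
  ∑' k : ℕ, ((-1 : ℝ) ^ k / (Nat.factorial k * Real.Gamma ((k : ℝ) + v + 1))) *
    (x / 2) ^ (2 * (k : ℝ) + v)

open Filter Set Topology Module
open scoped symmDiff FourierTransform SchwartzMap ENNReal Nat

section Correlation

lemma tendsto_measureReal_inter_preimage_sub {G : Type*} [AddGroup G] [TopologicalSpace G]
    [IsTopologicalAddGroup G] [MeasurableSpace G] [BorelSpace G] {μ : Measure G}
    [μ.IsAddRightInvariant] [μ.InnerRegularCompactLTTop] [IsLocallyFiniteMeasure μ]
    {S : Set G} (hS : MeasurableSet S) (hμS : μ S ≠ ∞) :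
    Tendsto (fun h ↦ μ.real (S ∩ (· - h) ⁻¹' S)) (𝓝 0) (𝓝 (μ.real S)) := by
  let translate : C(G, C(G, G)) := ContinuousMap.curry ⟨fun p ↦ p.2 - p.1, by fun_prop⟩
  have translate_preserving (h : G) : MeasurePreserving (translate h) μ μ :=
    measurePreserving_sub_right μ h
  have preimage_zero : translate 0 ⁻¹' S = S := by ext x; simp [translate]
  have symmDiff_tendsto : Tendsto (fun h ↦ μ.real ((translate h ⁻¹' S) ∆ S)) (𝓝 0) (𝓝 0) := by
    have := tendsto_measure_symmDiff_preimage_nhds_zero (translate.continuous.tendsto 0)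
      (.of_forall translate_preserving) (translate_preserving 0) hS.nullMeasurableSet hμS
    rw [preimage_zero] at this
    exact (ENNReal.tendsto_toReal ENNReal.zero_ne_top).comp this
  refine tendsto_iff_dist_tendsto_zero.2 (squeeze_zero (fun _ ↦ dist_nonneg) (fun h ↦ ?_)
    symmDiff_tendsto)
  have hSh : MeasurableSet (translate h ⁻¹' S) := (translate h).continuous.measurable hS
  have hμSh : μ (translate h ⁻¹' S) ≠ ∞ := by
    rwa [(translate_preserving h).measure_preimage hS.nullMeasurableSet]
  calc |μ.real (S ∩ translate h ⁻¹' S) - μ.real S|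
      ≤ μ.real ((S ∩ translate h ⁻¹' S) ∆ S) :=
        abs_measureReal_sub_le_measureReal_symmDiff' (hS.inter hSh).nullMeasurableSet
          hS.nullMeasurableSet (measure_ne_top_of_subset inter_subset_left hμS) hμS
    _ ≤ μ.real ((translate h ⁻¹' S) ∆ S) :=
        measureReal_mono (fun x ↦ by simp only [mem_symmDiff, mem_inter_iff]; tauto)
          (measure_ne_top_of_subset symmDiff_subset_union (measure_union_ne_top hμSh hμS))

variable {E F : Type*} [NormedAddCommGroup E] [NormedSpace ℝ E] [FiniteDimensional ℝ E]
  [MeasurableSpace E] [BorelSpace E] [NormedAddCommGroup F] [NormedSpace ℝ F]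
  (μ : Measure E) [μ.IsAddHaarMeasure] {S : Set E} {c : ℝ}

lemma pow_smul_setIntegral_comp_smul_sub (K : E → F) (hS : MeasurableSet S) (hc : 0 < c) (x : E) :
    c ^ finrank ℝ E • ∫ y in S, K (c • (x - y)) ∂μ =
      ∫ z, {z | x - c⁻¹ • z ∈ S}.indicator K z ∂μ := by
  calc c ^ finrank ℝ E • ∫ y in S, K (c • (x - y)) ∂μ
      = c ^ finrank ℝ E • ∫ y, {z | x - c⁻¹ • z ∈ S}.indicator K (c • (x - y)) ∂μ := by
        rw [← integral_indicator hS]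
        congr 2 with y
        have hy : x - c⁻¹ • c • (x - y) = y := by rw [inv_smul_smul₀ hc.ne', sub_sub_cancel]
        by_cases hyS : y ∈ S <;> simp [indicator, hy, hyS]
    _ = c ^ finrank ℝ E • ∫ y, {z | x - c⁻¹ • z ∈ S}.indicator K (c • y) ∂μ := by
        rw [integral_sub_left_eq_self (fun y ↦ {z | x - c⁻¹ • z ∈ S}.indicator K (c • y)) μ x]
    _ = ∫ z, {z | x - c⁻¹ • z ∈ S}.indicator K z ∂μ := by
        rw [Measure.integral_comp_smul_of_nonneg μ _ c (hR := hc.le),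
          smul_inv_smul₀ (pow_ne_zero _ hc.ne')]

variable [CompleteSpace F] {K : E → F}

lemma pow_smul_setIntegral_setIntegral_comp_smul_sub (hK : Integrable K μ)
    (hS : MeasurableSet S) (hμS : μ S ≠ ∞) (hc : 0 < c) :
    c ^ finrank ℝ E • ∫ x in S, ∫ y in S, K (c • (x - y)) ∂μ ∂μ =
      ∫ z, μ.real (S ∩ (· - c⁻¹ • z) ⁻¹' S) • K z ∂μ := by
  have : IsFiniteMeasure (μ.restrict S) := ⟨by simpa using hμS.lt_top⟩
  have hT : MeasurableSet {p : E × E | p.1 - c⁻¹ • p.2 ∈ S} :=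
    (by fun_prop : Measurable fun p : E × E ↦ p.1 - c⁻¹ • p.2) hS
  calc c ^ finrank ℝ E • ∫ x in S, ∫ y in S, K (c • (x - y)) ∂μ ∂μ
      = ∫ x in S, ∫ z, {z | x - c⁻¹ • z ∈ S}.indicator K z ∂μ ∂μ := by
        simp only [← integral_smul, pow_smul_setIntegral_comp_smul_sub μ K hS hc]
    _ = ∫ z, ∫ x in S, {z | x - c⁻¹ • z ∈ S}.indicator K z ∂μ ∂μ :=
        integral_integral_swap ((hK.comp_snd (μ.restrict S)).indicator hT)
    _ = ∫ z, μ.real (S ∩ (· - c⁻¹ • z) ⁻¹' S) • K z ∂μ := by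
        congr 1 with z
        have hSz : MeasurableSet ((· - c⁻¹ • z) ⁻¹' S) := (measurable_sub_const _) hS
        rw [inter_comm, ← measureReal_restrict_apply hSz, ← setIntegral_const,
          ← integral_indicator hSz]
        rfl

theorem tendsto_pow_smul_setIntegral_setIntegral_comp_smul_sub (hK : Integrable K μ)
    (hS : MeasurableSet S) (hμS : μ S ≠ ∞) :
    Tendsto (fun c : ℝ ↦ c ^ finrank ℝ E • ∫ x in S, ∫ y in S, K (c • (x - y)) ∂μ ∂μ)
      atTop (𝓝 (μ.real S • ∫ z, K z ∂μ)) := by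
  have overlap_tendsto := tendsto_measureReal_inter_preimage_sub hS hμS
  have overlap_measurable (c : ℝ) : Measurable fun z ↦ μ.real (S ∩ (· - c⁻¹ • z) ⁻¹' S) := by
    have hT : MeasurableSet {p : E × E | p.2 ∈ S ∧ p.2 - c⁻¹ • p.1 ∈ S} :=
      (measurable_snd hS).inter
        ((by fun_prop : Measurable fun p : E × E ↦ p.2 - c⁻¹ • p.1) hS)
    exact (measurable_measure_prodMk_left hT).ennreal_toReal
  rw [← integral_smul]
  refine Tendsto.congr' ?_ (tendsto_integral_filter_of_dominated_convergence
    (F := fun c z ↦ μ.real (S ∩ (· - c⁻¹ • z) ⁻¹' S) • K z) (fun z ↦ μ.real S * ‖K z‖)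
    (.of_forall fun c ↦ (overlap_measurable c).aestronglyMeasurable.smul hK.1)
    (.of_forall fun c ↦ .of_forall fun z ↦ ?_) (hK.norm.const_mul _) (.of_forall fun z ↦ ?_))
  · filter_upwards [eventually_gt_atTop 0] with c hc
    exact (pow_smul_setIntegral_setIntegral_comp_smul_sub μ hK hS hμS hc).symm
  · rw [norm_smul, norm_of_nonneg measureReal_nonneg]
    gcongr
    exact inter_subset_left
  · have inv_smul_tendsto : Tendsto (fun c : ℝ ↦ c⁻¹ • z) atTop (𝓝 0) := by
      simpa using (tendsto_inv_atTop_zero (𝕜 := ℝ)).smul_const z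
    exact (overlap_tendsto.comp inv_smul_tendsto).smul_const (K z)

end Correlation

section Plancherel

variable {E F : Type*} [NormedAddCommGroup E] [InnerProductSpace ℝ E] [FiniteDimensional ℝ E]
  [MeasurableSpace E] [BorelSpace E] [NormedAddCommGroup F] [InnerProductSpace ℂ F]
  [CompleteSpace F] {f : E → F}

lemma fourier_toLp_ae_eq (hf : Integrable f) (hf₂ : MemLp f 2) :
    (𝓕 (hf₂.toLp f) : Lp F 2 (volume : Measure E)) =ᵐ[volume] 𝓕 f := by
  have fourier_continuous : Continuous (𝓕 f) :=
    VectorFourier.fourierIntegral_continuous continuous_fourierChar continuous_inner hf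
  refine ae_eq_of_integral_contDiff_smul_eq ((Lp.memLp _).locallyIntegrable (by norm_num))
    fourier_continuous.locallyIntegrable fun g g_smooth g_compact ↦ ?_
  let G : 𝓢(E, ℂ) := (g_compact.comp_left (g := Complex.ofRealCLM) rfl).toSchwartzMap
    (Complex.ofRealCLM.contDiff.comp g_smooth)
  have G_smul (h : E → F) (x : E) : G x • h x = g x • h x := by simp [G]
  calc ∫ x, g x • (𝓕 (hf₂.toLp f) : Lp F 2 (volume : Measure E)) x
      = ((𝓕 (hf₂.toLp f) : Lp F 2 (volume : Measure E)) : 𝓢'(E, F)) G := by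
        simp only [Lp.toTemperedDistribution_apply, G_smul]
    _ = ∫ ξ, (𝓕 G) ξ • (hf₂.toLp f) ξ := by
        rw [← Lp.fourier_toTemperedDistribution_eq, TemperedDistribution.fourier_apply,
          Lp.toTemperedDistribution_apply]
    _ = ∫ ξ, 𝓕 (G : E → ℂ) ξ • f ξ := by
        refine integral_congr_ae (hf₂.coeFn_toLp.mono fun x hx ↦ ?_)
        simp only [hx, SchwartzMap.fourier_coe]
    _ = ∫ x, G x • 𝓕 f x := by
        simpa using! VectorFourier.integral_fourierIntegral_smul_eq_flip (L := innerₗ E)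
          continuous_fourierChar continuous_inner G.integrable hf
    _ = ∫ x, g x • 𝓕 f x := by simp only [G_smul]

lemma eLpNorm_fourier_eq (hf : Integrable f) (hf₂ : MemLp f 2) :
    eLpNorm (𝓕 f) 2 = eLpNorm f 2 := by
  rw [← eLpNorm_congr_ae (fourier_toLp_ae_eq hf hf₂), ← eLpNorm_congr_ae hf₂.coeFn_toLp,
    ← Lp.enorm_def, ← Lp.enorm_def, ← ofReal_norm, ← ofReal_norm, Lp.norm_fourier_eq]

lemma memLp_fourier (hf : Integrable f) (hf₂ : MemLp f 2) : MemLp (𝓕 f) 2 :=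
  (memLp_congr_ae (fourier_toLp_ae_eq hf hf₂)).1 (Lp.memLp _)

lemma integral_norm_sq_fourier_eq (hf : Integrable f) (hf₂ : MemLp f 2) :
    ∫ w, ‖𝓕 f w‖ ^ 2 = ∫ x, ‖f x‖ ^ 2 := by
  have h := eLpNorm_fourier_eq hf hf₂
  rw [(memLp_fourier hf hf₂).eLpNorm_eq_integral_rpow_norm two_ne_zero ENNReal.ofNat_ne_top,
    hf₂.eLpNorm_eq_integral_rpow_norm two_ne_zero ENNReal.ofNat_ne_top] at h
  rw [ENNReal.ofReal_eq_ofReal_iff (by positivity) (by positivity),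
    rpow_left_inj (by positivity) (by positivity) (by simp)] at h
  simpa using h

end Plancherel

section Indicator

variable {E : Type*} [NormedAddCommGroup E] [InnerProductSpace ℝ E] [FiniteDimensional ℝ E]
  [MeasurableSpace E] [BorelSpace E] {s : Set E}

lemma memLp_fourier_indicator_one (hs : MeasurableSet s) (hμs : volume s ≠ ∞) :
    MemLp (𝓕 (s.indicator fun _ ↦ (1 : ℂ))) 2 :=
  memLp_fourier ((integrable_indicator_iff hs).2 (integrableOn_const hμs))
    (memLp_indicator_const 2 hs 1 (.inr hμs))

lemma integral_norm_sq_fourier_indicator_one (hs : MeasurableSet s) (hμs : volume s ≠ ∞) :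
    ∫ w, ‖𝓕 (s.indicator fun _ ↦ (1 : ℂ)) w‖ ^ 2 = volume.real s := by
  rw [integral_norm_sq_fourier_eq ((integrable_indicator_iff hs).2 (integrableOn_const hμs))
    (memLp_indicator_const 2 hs 1 (.inr hμs)), ← integral_indicator_one hs]
  congr 1 with x
  by_cases hx : x ∈ s <;> simp [hx]

lemma fourier_indicator_one_of_neg_eq (hs : MeasurableSet s) (hμs : volume s ≠ ∞)
    (hneg : -s = s) (w : E) :
    𝓕 (s.indicator fun _ ↦ (1 : ℂ)) w = (∫ x in s, cos (inner ℝ ((2 * π) • w) x) : ℝ) := by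
  set θ : E → ℝ := fun x ↦ inner ℝ ((2 * π) • w) x with hθ
  have hint (a : ℂ) (ha : a.re = 0) : IntegrableOn (fun x ↦ Complex.exp (θ x * a)) s :=
    (integrableOn_const hμs (C := (1 : ℝ))).mono' (by fun_prop)
      (.of_forall fun x ↦ by simp [Complex.norm_exp, ha])
  have fourier_eq : 𝓕 (s.indicator fun _ ↦ (1 : ℂ)) w =
      ∫ x in s, Complex.exp (θ x * -Complex.I) := by
    rw [fourier_eq', ← integral_indicator hs]
    congr 1 with x
    by_cases hx : x ∈ s <;>
      simp [hx, hθ, real_inner_smul_left, real_inner_comm w x, mul_assoc]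
  have reflect : ∫ x in s, Complex.exp (θ x * -Complex.I) =
      ∫ x in s, Complex.exp (θ x * Complex.I) := by
    have := (Measure.measurePreserving_neg (volume : Measure E)).setIntegral_preimage_emb
      (MeasurableEquiv.neg E).measurableEmbedding (fun x ↦ Complex.exp (θ x * Complex.I)) s
    rw [neg_preimage, hneg] at this
    simpa [hθ] using this
  rw [fourier_eq, ← integral_complex_ofReal]
  apply mul_left_cancel₀ (two_ne_zero (α := ℂ))
  calc 2 * ∫ x in s, Complex.exp (θ x * -Complex.I)
      = ∫ x in s, Complex.exp (θ x * Complex.I) + Complex.exp (θ x * -Complex.I) := by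
        rw [integral_add (hint _ (by simp)) (hint _ (by simp)), two_mul, reflect]
    _ = 2 * ∫ x in s, (cos (θ x) : ℂ) := by
        rw [← integral_const_mul]
        simp [Complex.two_cos]

end Indicator

section Homogeneous

variable {E : Type*} [NormedAddCommGroup E] [NormedSpace ℝ E] [FiniteDimensional ℝ E]
  [Nontrivial E] [MeasurableSpace E] [BorelSpace E] (μ : Measure E) [μ.IsAddHaarMeasure]
  {f : E → ℝ} {m : ℕ}

lemma integral_homogeneous_mul_fun_norm (hf : ∀ r : ℝ, 0 < r → ∀ x, f (r • x) = r ^ m * f x)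
    (g : ℝ → ℝ) :
    ∫ x, f x * g ‖x‖ ∂μ =
      (∫ ω, f ω ∂μ.toSphere) * ∫ r in Ioi 0, r ^ (finrank ℝ E - 1 + m) * g r := by
  have polar (x : ({0}ᶜ : Set E)) : f x * g ‖(x : E)‖ =
      f (homeomorphUnitSphereProd E x).1 * ((homeomorphUnitSphereProd E x).2 ^ m *
        g (homeomorphUnitSphereProd E x).2) := by
    have hx : 0 < ‖(x : E)‖ := norm_pos_iff.2 x.2
    have hfx : f x = ‖(x : E)‖ ^ m * f (‖(x : E)‖⁻¹ • (x : E)) := by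
      rw [← hf _ hx, smul_inv_smul₀ hx.ne']
    rw [homeomorphUnitSphereProd_apply_fst_coe, homeomorphUnitSphereProd_apply_snd_coe, hfx]
    ring
  calc ∫ x, f x * g ‖x‖ ∂μ
      = ∫ x : ({0}ᶜ : Set E), f x * g ‖(x : E)‖ ∂(μ.comap (↑)) := by
        rw [integral_subtype_comap (measurableSet_singleton _).compl fun x ↦ f x * g ‖x‖,
          restrict_compl_singleton]
    _ = ∫ p, f p.1 * ((p.2 : ℝ) ^ m * g p.2)
          ∂μ.toSphere.prod (.volumeIoiPow (finrank ℝ E - 1)) := by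
        simp only [polar]
        exact μ.measurePreserving_homeomorphUnitSphereProd.integral_comp
          (Homeomorph.measurableEmbedding _) fun p ↦ f p.1 * ((p.2 : ℝ) ^ m * g p.2)
    _ = (∫ ω, f ω ∂μ.toSphere) *
          ∫ r : Ioi (0 : ℝ), (r : ℝ) ^ m * g r ∂.volumeIoiPow (finrank ℝ E - 1) :=
        integral_prod_mul (fun ω : Metric.sphere (0 : E) 1 ↦ f ω)
          fun r : Ioi (0 : ℝ) ↦ (r : ℝ) ^ m * g r
    _ = _ := by
        congr 1
        simp only [Measure.volumeIoiPow, ENNReal.ofReal]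
        rw [integral_withDensity_eq_integral_smul
            (measurable_subtype_coe.pow_const _).real_toNNReal,
          integral_subtype_comap measurableSet_Ioi
            fun r : ℝ ↦ (r ^ (finrank ℝ E - 1)).toNNReal • (r ^ m * g r)]
        refine setIntegral_congr_fun measurableSet_Ioi fun r hr ↦ ?_
        simp only [NNReal.smul_def, coe_toNNReal _ (pow_nonneg (le_of_lt hr) _), smul_eq_mul,
          pow_add, mul_assoc]

lemma integral_Ioi_pow_mul_exp_neg_sq (k : ℕ) :
    ∫ r in Ioi (0 : ℝ), r ^ k * exp (-r ^ 2) = Gamma ((k + 1) / 2) / 2 := by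
  have := integral_rpow_mul_exp_neg_rpow two_pos (neg_one_lt_zero.trans_le k.cast_nonneg)
  simp only [rpow_natCast, rpow_two] at this
  rw [this]
  ring

lemma setIntegral_closedBall_homogeneous
    (hf : ∀ r : ℝ, 0 < r → ∀ x, f (r • x) = r ^ m * f x) :
    ∫ x in Metric.closedBall 0 1, f x ∂μ =
      (∫ x, f x * exp (-‖x‖ ^ 2) ∂μ) / Gamma ((m + finrank ℝ E : ℝ) / 2 + 1) := by
  obtain ⟨N, hN⟩ : ∃ N, N = finrank ℝ E - 1 + m := ⟨_, rfl⟩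
  have hN' : (m + finrank ℝ E : ℝ) = N + 1 := by
    have : m + finrank ℝ E = N + 1 := by have := finrank_pos (R := ℝ) (M := E); omega
    exact_mod_cast this
  have ball_eq : ∫ x in Metric.closedBall 0 1, f x ∂μ =
      ∫ x, f x * (Iic (1 : ℝ)).indicator 1 ‖x‖ ∂μ := by
    rw [← integral_indicator measurableSet_closedBall]
    simp [indicator]
  have radial_ball : ∫ r in Ioi (0 : ℝ), r ^ N * (Iic (1 : ℝ)).indicator 1 r = 1 / (N + 1) := by
    calc ∫ r in Ioi (0 : ℝ), r ^ N * (Iic (1 : ℝ)).indicator 1 r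
        = ∫ r in Ioi (0 : ℝ), (Iic (1 : ℝ)).indicator (fun r ↦ r ^ N) r := by
          simp [indicator]
      _ = ∫ r in (0 : ℝ)..1, r ^ N := by
          rw [setIntegral_indicator measurableSet_Iic, Ioi_inter_Iic,
            intervalIntegral.integral_of_le zero_le_one]
      _ = 1 / (N + 1) := by simp [integral_pow]
  rw [ball_eq, integral_homogeneous_mul_fun_norm μ hf,
    integral_homogeneous_mul_fun_norm μ hf fun r ↦ exp (-r ^ 2), ← hN, radial_ball,
    integral_Ioi_pow_mul_exp_neg_sq, hN', Gamma_add_one (by positivity)]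
  field_simp [(Gamma_pos_of_pos (by positivity : 0 < (N + 1 : ℝ) / 2)).ne']

end Homogeneous

lemma Gamma_nat_add_half_eq_factorial (k : ℕ) :
    Gamma (k + 1 / 2) = (2 * k)! / (4 ^ k * k !) * √π := by
  have h := Gamma_mul_Gamma_add_half (k + 1 / 2)
  rw [show (k + 1 / 2 + 1 / 2 : ℝ) = k + 1 by ring, Gamma_nat_eq_factorial,
    show (2 * (k + 1 / 2) : ℝ) = (2 * k : ℕ) + 1 by push_cast; ring, Gamma_nat_eq_factorial,
    show (1 - ((2 * k : ℕ) + 1) : ℝ) = -(2 * k : ℕ) by ring, rpow_neg two_pos.le, rpow_natCast,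
    pow_mul] at h
  norm_num at h ⊢
  field_simp at h ⊢
  linarith

lemma integral_pow_even_mul_exp_neg_sq (k : ℕ) :
    ∫ t : ℝ, t ^ (2 * k) * exp (-t ^ 2) = (2 * k)! / (4 ^ k * k !) * √π := by
  calc ∫ t : ℝ, t ^ (2 * k) * exp (-t ^ 2)
      = ∫ t : ℝ, |t| ^ (2 * k) * exp (-|t| ^ 2) := by simp [pow_mul]
    _ = 2 * ∫ t in Ioi (0 : ℝ), t ^ (2 * k) * exp (-t ^ 2) :=
        integral_comp_abs (f := fun t ↦ t ^ (2 * k) * exp (-t ^ 2))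
    _ = Gamma (k + 1 / 2) := by
        rw [integral_Ioi_pow_mul_exp_neg_sq]
        push_cast
        ring_nf
    _ = _ := Gamma_nat_add_half_eq_factorial k

section GaussianMoment

variable {E : Type*} [NormedAddCommGroup E] [InnerProductSpace ℝ E] [FiniteDimensional ℝ E]

lemma exists_orthonormalBasis_apply_eq {e : E} (he : ‖e‖ = 1) :
    ∃ (b : OrthonormalBasis (Fin (finrank ℝ E)) ℝ E) (i : Fin (finrank ℝ E)), b i = e := by
  have : Nontrivial E := ⟨e, 0, by rintro rfl; simp at he⟩
  let i : Fin (finrank ℝ E) := ⟨0, finrank_pos⟩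
  have orthonormal_singleton : Orthonormal ℝ (({i} : Set _).domRestrict fun _ ↦ e) :=
    ⟨fun _ ↦ he, fun j k hjk ↦ (hjk (Subsingleton.elim j k)).elim⟩
  obtain ⟨b, hb⟩ := orthonormal_singleton.exists_orthonormalBasis_extension_of_card_eq (by simp)
  exact ⟨b, i, hb i rfl⟩

variable [MeasurableSpace E] [BorelSpace E]

lemma integral_prod_inner_orthonormalBasis {ι : Type*} [Fintype ι] (b : OrthonormalBasis ι ℝ E)
    (g : ι → ℝ → ℝ) : ∫ x, ∏ i, g i (inner ℝ (b i) x) = ∏ i, ∫ t, g i t := by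
  rw [← integral_fintype_prod_volume_eq_prod,
    ← (PiLp.volume_preserving_ofLp ι).integral_comp
      (MeasurableEquiv.toLp 2 (ι → ℝ)).symm.measurableEmbedding,
    ← b.measurePreserving_repr.integral_comp b.repr.toHomeomorph.measurableEmbedding]
  simp only [b.repr_apply_apply]

lemma integral_inner_pow_even_mul_exp_neg_norm_sq_of_norm_eq_one {e : E} (he : ‖e‖ = 1) (k : ℕ) :
    ∫ x : E, inner ℝ e x ^ (2 * k) * exp (-‖x‖ ^ 2) =
      (2 * k)! / (4 ^ k * k !) * √π ^ finrank ℝ E := by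
  obtain ⟨b, i₀, rfl⟩ := exists_orthonormalBasis_apply_eq he
  let g (i : Fin (finrank ℝ E)) (t : ℝ) : ℝ := (if i = i₀ then t ^ (2 * k) else 1) * exp (-t ^ 2)
  have integral_g (i : Fin (finrank ℝ E)) :
      ∫ t, g i t = (if i = i₀ then ((2 * k)! / (4 ^ k * k !) : ℝ) else 1) * √π := by
    by_cases hi : i = i₀
    · simp [g, hi, integral_pow_even_mul_exp_neg_sq]
    · simpa [g, hi] using integral_gaussian 1
  calc ∫ x : E, inner ℝ (b i₀) x ^ (2 * k) * exp (-‖x‖ ^ 2)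
      = ∫ x : E, ∏ i, g i (inner ℝ (b i) x) := by
        congr 1 with x
        rw [Finset.prod_mul_distrib, ← exp_sum, Finset.sum_neg_distrib, b.sum_sq_inner_right x]
        simp
    _ = _ := by
        rw [integral_prod_inner_orthonormalBasis]
        simp only [integral_g, Finset.prod_mul_distrib]
        simp

variable [Nontrivial E]

lemma integral_inner_pow_even_mul_exp_neg_norm_sq (u : E) (k : ℕ) :
    ∫ x : E, inner ℝ u x ^ (2 * k) * exp (-‖x‖ ^ 2) =
      ‖u‖ ^ (2 * k) * ((2 * k)! / (4 ^ k * k !) * √π ^ finrank ℝ E) := by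
  obtain ⟨e, he, heu⟩ : ∃ e : E, ‖e‖ = 1 ∧ ‖u‖ • e = u := by
    rcases eq_or_ne u 0 with rfl | hu
    · obtain ⟨e, he⟩ := exists_norm_eq E zero_le_one
      exact ⟨e, he, by simp⟩
    · have hu' : ‖u‖ ≠ 0 := norm_ne_zero_iff.2 hu
      exact ⟨‖u‖⁻¹ • u, by simp [norm_smul, hu'], smul_inv_smul₀ hu' u⟩
  have inner_eq (x : E) : inner ℝ u x = ‖u‖ * inner ℝ e x := by
    rw [← real_inner_smul_left, heu]
  simp only [inner_eq, mul_pow, mul_assoc, integral_const_mul]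
  rw [integral_inner_pow_even_mul_exp_neg_norm_sq_of_norm_eq_one he]

lemma setIntegral_closedBall_inner_pow_even (u : E) (k : ℕ) :
    ∫ x in Metric.closedBall (0 : E) 1, inner ℝ u x ^ (2 * k) =
      ‖u‖ ^ (2 * k) * ((2 * k)! / (4 ^ k * k !) * √π ^ finrank ℝ E) /
        Gamma (k + finrank ℝ E / 2 + 1) := by
  rw [setIntegral_closedBall_homogeneous (m := 2 * k) volume fun r _ x ↦ by
      rw [real_inner_smul_right, mul_pow], integral_inner_pow_even_mul_exp_neg_norm_sq]
  congr 2
  push_cast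
  ring

end GaussianMoment

lemma hasSum_integral_cos {α : Type*} [MeasurableSpace α] {μ : Measure α} [IsFiniteMeasure μ]
    {θ : α → ℝ} (hθ : AEStronglyMeasurable θ μ) {C : ℝ} (hC : ∀ᵐ x ∂μ, |θ x| ≤ C) :
    HasSum (fun k : ℕ ↦ (-1) ^ k / (2 * k)! * ∫ x, θ x ^ (2 * k) ∂μ) (∫ x, cos (θ x) ∂μ) := by
  simp only [← integral_const_mul]
  refine hasSum_integral_of_dominated_convergence (fun k _ ↦ C ^ (2 * k) / (2 * k)!)
    (fun k ↦ (hθ.pow _).const_mul _) (fun k ↦ ?_)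
    (.of_forall fun _ ↦ (hasSum_cosh C).summable) (integrable_const _)
    (.of_forall fun x ↦ ?_)
  · filter_upwards [hC] with x hx
    rw [norm_mul, norm_div, norm_pow, norm_neg, norm_one, one_pow, norm_natCast, one_div_mul_eq_div,
      norm_pow]
    gcongr
    exact hx
  · simpa only [div_mul_eq_mul_div] using hasSum_cos (θ x)

section Bessel

lemma besselJ_eq_rpow_mul_tsum {x : ℝ} (hx : 0 < x) (v : ℝ) :
    besselJ v x =
      (x / 2) ^ v * ∑' k : ℕ, (-1) ^ k / (k ! * Gamma (k + v + 1)) * (x / 2) ^ (2 * k) := by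
  rw [besselJ, ← tsum_mul_left]
  congr 1 with k
  rw [rpow_add (half_pos hx), ← Nat.cast_ofNat, ← Nat.cast_mul, rpow_natCast]
  ring

variable {E : Type*} [NormedAddCommGroup E] [InnerProductSpace ℝ E] [FiniteDimensional ℝ E]
  [Nontrivial E] [MeasurableSpace E] [BorelSpace E]

lemma setIntegral_closedBall_cos_inner {u : E} (hu : u ≠ 0) :
    ∫ x in Metric.closedBall (0 : E) 1, cos (inner ℝ u x) =
      (2 * π / ‖u‖) ^ (finrank ℝ E / 2 : ℝ) * besselJ (finrank ℝ E / 2) ‖u‖ := by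
  have hu' : 0 < ‖u‖ := norm_pos_iff.2 hu
  have : IsFiniteMeasure (volume.restrict (Metric.closedBall (0 : E) 1)) :=
    ⟨by simpa using measure_closedBall_lt_top⟩
  have abs_inner_le : ∀ᵐ x ∂volume.restrict (Metric.closedBall (0 : E) 1), |inner ℝ u x| ≤ ‖u‖ := by
    filter_upwards [ae_restrict_mem measurableSet_closedBall] with x hx
    exact (abs_real_inner_le_norm u x).trans
      (mul_le_of_le_one_right (norm_nonneg u) (by simpa using hx))
  have power_series := hasSum_integral_cos (by fun_prop) abs_inner_le
  have prefactor : (2 * π / ‖u‖) ^ (finrank ℝ E / 2 : ℝ) * (‖u‖ / 2) ^ (finrank ℝ E / 2 : ℝ) =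
      √π ^ finrank ℝ E := by
    rw [← mul_rpow (by positivity) (by positivity), sqrt_eq_rpow, ← rpow_natCast,
      ← rpow_mul pi_pos.le]
    congr 1 <;> field_simp
  rw [besselJ_eq_rpow_mul_tsum hu', ← mul_assoc, prefactor, ← tsum_mul_left,
    ← power_series.tsum_eq]
  congr 1 with k
  rw [setIntegral_closedBall_inner_pow_even, div_pow, pow_mul 2,
    show (2 : ℝ) ^ 2 = 4 by norm_num]
  field_simp

/-- The radial profile of the squared kernels: in dimension `n`, the squared kernel of `Q_c` is
`(c² / (2π))ⁿ` times this function at `r = c‖x - y‖`. For `n ≠ 0` its value at `r = 0` is the junk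
value `0` of the division. -/
def sqBesselProfile (n : ℕ) (r : ℝ) : ℝ := besselJ (n / 2) r ^ 2 / r ^ n

lemma norm_sq_fourier_indicator_closedBall {w : E} (hw : w ≠ 0) :
    ‖𝓕 ((Metric.closedBall (0 : E) 1).indicator fun _ ↦ (1 : ℂ)) w‖ ^ 2 =
      (2 * π) ^ finrank ℝ E * sqBesselProfile (finrank ℝ E) ‖(2 * π) • w‖ := by
  have hw' : (2 * π) • w ≠ 0 := smul_ne_zero (by positivity) hw
  have rpow_sq {a : ℝ} (ha : 0 ≤ a) :
      (a ^ (finrank ℝ E / 2 : ℝ)) ^ 2 = a ^ finrank ℝ E := by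
    rw [← rpow_natCast, ← rpow_mul ha, ← rpow_natCast a]
    norm_num
  rw [fourier_indicator_one_of_neg_eq measurableSet_closedBall measure_closedBall_lt_top.ne
      (by simp), setIntegral_closedBall_cos_inner hw', Complex.norm_real, norm_eq_abs, sq_abs,
    mul_pow, rpow_sq (by positivity), sqBesselProfile, div_pow]
  ring

lemma norm_sq_fourier_indicator_closedBall_ae_eq :
    (fun w ↦ ‖𝓕 ((Metric.closedBall (0 : E) 1).indicator fun _ ↦ (1 : ℂ)) w‖ ^ 2) =ᵐ[volume]
      fun w ↦ (2 * π) ^ finrank ℝ E * sqBesselProfile (finrank ℝ E) ‖(2 * π) • w‖ :=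
  (Measure.ae_ne volume 0).mono fun _ ↦ norm_sq_fourier_indicator_closedBall

lemma integrable_sqBesselProfile_norm :
    Integrable fun z : E ↦ sqBesselProfile (finrank ℝ E) ‖z‖ := by
  have h := (memLp_fourier_indicator_one (E := E) measurableSet_closedBall
    (measure_closedBall_lt_top (x := 0) (r := 1)).ne).integrable_norm_pow two_ne_zero
  rw [integrable_congr norm_sq_fourier_indicator_closedBall_ae_eq,
    integrable_const_mul_iff (IsUnit.mk0 _ (pow_ne_zero _ two_pi_pos.ne'))] at h
  exact (integrable_comp_smul_iff volume _ two_pi_pos.ne').1 h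

lemma integral_sqBesselProfile_norm :
    ∫ z : E, sqBesselProfile (finrank ℝ E) ‖z‖ = volume.real (Metric.closedBall (0 : E) 1) := by
  rw [← integral_norm_sq_fourier_indicator_one measurableSet_closedBall
      measure_closedBall_lt_top.ne,
    integral_congr_ae norm_sq_fourier_indicator_closedBall_ae_eq, integral_const_mul,
    Measure.integral_comp_smul_of_nonneg volume
      (fun z : E ↦ sqBesselProfile (finrank ℝ E) ‖z‖) (2 * π) (hR := two_pi_pos.le),
    smul_eq_mul, mul_inv_cancel_left₀ (pow_ne_zero _ two_pi_pos.ne')]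

lemma volume_real_closedBall_zero_one :
    volume.real (Metric.closedBall (0 : E) 1) =
      √π ^ finrank ℝ E / Gamma (finrank ℝ E / 2 + 1) := by
  have : 0 < Gamma (finrank ℝ E / 2 + 1 : ℝ) := Gamma_pos_of_pos (by positivity)
  rw [Measure.real, InnerProductSpace.volume_closedBall, ENNReal.ofReal_one, one_pow, one_mul,
    ENNReal.toReal_ofReal (by positivity)]

theorem stmt_18_general {S : Set E} (hS : MeasurableSet S) (hμS : volume S ≠ ∞) :
    Tendsto (fun c : ℝ ↦ 1 / c ^ finrank ℝ E * (c ^ 2 / (2 * π)) ^ finrank ℝ E *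
        ∫ x in S, ∫ y in S,
          besselJ (finrank ℝ E / 2) (c * ‖x - y‖) ^ 2 / (c * ‖x - y‖) ^ finrank ℝ E)
      atTop (𝓝 (volume.real S * volume.real (Metric.closedBall (0 : E) 1) /
        (2 * π) ^ finrank ℝ E)) := by
  have rescaled_tendsto := (tendsto_pow_smul_setIntegral_setIntegral_comp_smul_sub volume
    integrable_sqBesselProfile_norm hS hμS).div_const ((2 * π) ^ finrank ℝ E)
  rw [integral_sqBesselProfile_norm] at rescaled_tendsto
  refine rescaled_tendsto.congr' ?_
  filter_upwards [eventually_gt_atTop 0] with c hc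
  simp only [norm_smul, norm_of_nonneg hc.le, sqBesselProfile, smul_eq_mul]
  rw [div_pow, ← pow_mul]
  field_simp
  ring

end Bessel

/-- Asymptotics of the squared Hilbert–Schmidt norm of `Q_c`:
`lim_{c→∞} (1/c^d)·(c²/(2π))^d·∫_{B^d}∫_{B^d} J_{d/2}(c‖x-y‖)²/(c‖x-y‖)^d dx dy
  = 1/(2^d Γ(d/2+1)²)`. -/
theorem stmt_18 (d : ℕ) (hd : 1 ≤ d) :
    Filter.Tendsto (fun c : ℝ =>
      1 / c ^ d * (c ^ 2 / (2 * Real.pi)) ^ d *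
        ∫ x in Metric.closedBall (0 : EuclideanSpace ℝ (Fin d)) 1,
          ∫ y in Metric.closedBall (0 : EuclideanSpace ℝ (Fin d)) 1,
            besselJ ((d : ℝ) / 2) (c * ‖x - y‖) ^ 2 / (c * ‖x - y‖) ^ d)
      Filter.atTop
      (nhds (1 / (2 ^ d * Real.Gamma ((d : ℝ) / 2 + 1) ^ 2))) := by
  have : Nonempty (Fin d) := ⟨⟨0, hd⟩⟩
  have h := stmt_18_general (E := EuclideanSpace ℝ (Fin d)) measurableSet_closedBall
    (measure_closedBall_lt_top (x := 0) (r := 1)).ne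
  simp only [volume_real_closedBall_zero_one, finrank_euclideanSpace_fin] at h
  convert h using 2
  rw [div_mul_div_comm, ← mul_pow, mul_self_sqrt pi_pos.le, mul_pow]
  field_simp

end
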